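/- arXiv:2501.10599 — 2 statements merged into one kernel-verified Lean document; each statement's English description precedes it below -/
import Mathlib

section
/- Let p > 1 and a, b, L > 0, and let λ be a Dirichlet eigenvalue of −Δ^{a,b}_p on (0,L) with λ ≠ λ^{a,b}_{1,p}(0,L). Then every eigenfunction associated to λ changes sign: if u is a nontrivial C¹ weak solution of −Δ^{a,b}_p u = λ |u|^{p−2} u on (0,L) with u(0) = u(L) = 0, then there exist t₁, t₂ ∈ (0,L) with u(t₁) > 0 and u(t₂) < 0. -/
open Set

/-- `u` is C¹ on `[α, γ]` with derivative `u'` there. -/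
def C1On (α γ : ℝ) (u u' : ℝ → ℝ) : Prop :=
  (∀ t ∈ Set.Icc α γ, HasDerivWithinAt u (u' t) (Set.Icc α γ) t) ∧
  ContinuousOn u' (Set.Icc α γ)

/-- Admissible functions on `[0, L]`: C¹ with zero boundary values. -/
def Adm (L : ℝ) (u u' : ℝ → ℝ) : Prop :=
  C1On 0 L u u' ∧ u 0 = 0 ∧ u L = 0

/-- The asymmetric energy integrand `a^p (s⁺)^p + b^p (s⁻)^p`. -/
noncomputable def asymE (p a b s : ℝ) : ℝ :=
  a ^ p * (max s 0) ^ p + b ^ p * (max (-s) 0) ^ p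

/-- The asymmetric flux `a^p (s⁺)^(p-1) - b^p (s⁻)^(p-1)`. -/
noncomputable def asymFlux (p a b s : ℝ) : ℝ :=
  a ^ p * (max s 0) ^ (p - 1) - b ^ p * (max (-s) 0) ^ (p - 1)

/-- The first Dirichlet eigenvalue `λ^{a,b}_{1,p}(0,L)`, as the infimum of the
asymmetric energy over normalized admissible functions. -/
noncomputable def lam1 (p a b L : ℝ) : ℝ :=
  sInf { E : ℝ | ∃ u u' : ℝ → ℝ, Adm L u u' ∧
    (∫ t in (0:ℝ)..L, |u t| ^ p) = 1 ∧
    E = ∫ t in (0:ℝ)..L, asymE p a b (u' t) }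

/-- `u` (a C¹ function on `[0,L]` with derivative `u'` and zero boundary values)
is a weak solution of `-Δ^{a,b}_p u = g` on `(0,L)`. -/
def IsWeakSol (p a b L : ℝ) (u u' g : ℝ → ℝ) : Prop :=
  Adm L u u' ∧
  ∀ φ φ' : ℝ → ℝ, Adm L φ φ' →
    (∫ t in (0:ℝ)..L, asymFlux p a b (u' t) * φ' t) =
      ∫ t in (0:ℝ)..L, g t * φ t


lemma aux_flux_homog {p a b x : ℝ} (hx : 0 ≤ x) (s : ℝ) :
    asymFlux p a b (x * s) = x ^ (p - 1) * asymFlux p a b s := by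
  have h1 : max (x * s) 0 = x * max s 0 := by
    rw [mul_max_of_nonneg _ _ hx, mul_zero]
  have h2 : max (-(x * s)) 0 = x * max (-s) 0 := by
    rw [mul_max_of_nonneg _ _ hx, mul_zero, mul_neg]
  unfold asymFlux
  rw [h1, h2, Real.mul_rpow hx (le_max_right _ _), Real.mul_rpow hx (le_max_right _ _)]
  ring

lemma aux_E_homog {p a b x : ℝ} (hx : 0 ≤ x) (s : ℝ) :
    asymE p a b (x * s) = x ^ p * asymE p a b s := by
  have h1 : max (x * s) 0 = x * max s 0 := by
    rw [mul_max_of_nonneg _ _ hx, mul_zero]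
  have h2 : max (-(x * s)) 0 = x * max (-s) 0 := by
    rw [mul_max_of_nonneg _ _ hx, mul_zero, mul_neg]
  unfold asymE
  rw [h1, h2, Real.mul_rpow hx (le_max_right _ _), Real.mul_rpow hx (le_max_right _ _)]
  ring

lemma aux_E_nonneg {p a b : ℝ} (ha : 0 < a) (hb : 0 < b) (s : ℝ) : 0 ≤ asymE p a b s := by
  unfold asymE
  have := le_max_right s 0
  have := le_max_right (-s) 0
  positivity

lemma aux_E_neg {p a b : ℝ} (s : ℝ) : asymE p b a (-s) = asymE p a b s := by
  unfold asymE; rw [neg_neg]; ring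

lemma aux_flux_neg {p a b : ℝ} (s : ℝ) : asymFlux p b a (-s) = -asymFlux p a b s := by
  unfold asymFlux; rw [neg_neg]; ring

lemma aux_flux_pos {p a b s : ℝ} (hp : 1 < p) (hs : 0 ≤ s) :
    asymFlux p a b s = a ^ p * s ^ (p - 1) := by
  unfold asymFlux
  rw [max_eq_left hs, max_eq_right (by linarith), Real.zero_rpow (by linarith)]; ring

lemma aux_E_pos {p a b s : ℝ} (hp : 1 < p) (hs : 0 ≤ s) :
    asymE p a b s = a ^ p * s ^ p := by
  unfold asymE
  rw [max_eq_left hs, max_eq_right (by linarith), Real.zero_rpow (by linarith)]; ring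

lemma aux_flux_mul {p a b : ℝ} (hp : 1 < p) (s : ℝ) :
    asymFlux p a b s * s = asymE p a b s := by
  have key : ∀ (a b s : ℝ), 0 ≤ s → asymFlux p a b s * s = asymE p a b s := by
    intro a b s hs
    rw [aux_flux_pos hp hs, aux_E_pos hp hs, mul_assoc]
    congr 1
    nth_rewrite 2 [← Real.rpow_one s]
    rw [← Real.rpow_add_of_nonneg hs (by linarith) (by linarith)]; congr 1; ring
  rcases le_total 0 s with hs | hs
  · exact key a b s hs
  · have := key b a (-s) (by linarith)
    rw [aux_flux_neg, aux_E_neg] at this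
    linarith

lemma aux_young {p : ℝ} (hp : 1 < p) {s r : ℝ} (hs : 0 ≤ s) (hr : 0 ≤ r) :
    p * (s ^ (p - 1) * r) ≤ r ^ p + (p - 1) * s ^ p := by
  have hc : p.HolderConjugate (p / (p - 1)) := Real.HolderConjugate.conjExponent hp
  have h := Real.young_inequality_of_nonneg hr (Real.rpow_nonneg hs (p - 1)) hc
  have hp1 : p - 1 ≠ 0 := by linarith
  have hp0 : p ≠ 0 := by linarith
  rw [← Real.rpow_mul hs, mul_div_cancel₀ _ hp1] at h
  have h2 := mul_le_mul_of_nonneg_left h (by linarith : 0 ≤ p)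
  have e : p * (r ^ p / p + s ^ p / (p / (p - 1))) = r ^ p + (p - 1) * s ^ p := by
    field_simp
  rw [e] at h2
  linarith

lemma aux_young_flux {p a b : ℝ} (hp : 1 < p) (ha : 0 < a) (hb : 0 < b) (s r : ℝ) :
    p * (asymFlux p a b s * r) ≤ asymE p a b r + (p - 1) * asymE p a b s := by
  have key : ∀ (a b s r : ℝ), 0 < a → 0 < b → 0 ≤ s →
      p * (asymFlux p a b s * r) ≤ asymE p a b r + (p - 1) * asymE p a b s := by
    intro a b s r ha hb hs
    rw [aux_flux_pos hp hs, aux_E_pos hp hs]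
    have hap : 0 < a ^ p := Real.rpow_pos_of_pos ha p
    rcases le_total 0 r with hr | hr
    · rw [aux_E_pos hp hr]
      have := mul_le_mul_of_nonneg_left (aux_young hp hs hr) hap.le
      linarith
    · have h1 := aux_E_nonneg (p := p) ha hb r
      have h2 : 0 ≤ s ^ (p - 1) := Real.rpow_nonneg hs _
      have h3 : 0 ≤ s ^ p := Real.rpow_nonneg hs _
      have h4 : 0 ≤ (p - 1) * (a ^ p * s ^ p) :=
        mul_nonneg (by linarith) (by positivity)
      have h5 : p * (a ^ p * s ^ (p - 1) * r) ≤ 0 :=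
        mul_nonpos_of_nonneg_of_nonpos (by linarith)
          (mul_nonpos_of_nonneg_of_nonpos (by positivity) hr)
      linarith
  rcases le_total 0 s with hs | hs
  · exact key a b s r ha hb hs
  · have := key b a (-s) (-r) hb ha (by linarith)
    rw [aux_flux_neg, aux_E_neg, aux_E_neg] at this
    linarith

lemma aux_flux_strictMono {p a b : ℝ} (hp : 1 < p) (ha : 0 < a) (hb : 0 < b) :
    StrictMono (asymFlux p a b) := by
  intro s t hst
  have hap : 0 < a ^ p := Real.rpow_pos_of_pos ha p
  have hbp : 0 < b ^ p := Real.rpow_pos_of_pos hb p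
  have h1 : (max s 0) ^ (p - 1) ≤ (max t 0) ^ (p - 1) :=
    Real.rpow_le_rpow (le_max_right _ _) (max_le_max_right 0 hst.le) (by linarith)
  have h2 : (max (-t) 0) ^ (p - 1) ≤ (max (-s) 0) ^ (p - 1) :=
    Real.rpow_le_rpow (le_max_right _ _) (max_le_max_right 0 (by linarith)) (by linarith)
  unfold asymFlux
  rcases lt_or_ge 0 t with ht | ht
  · have h1 : (max s 0) ^ (p - 1) < (max t 0) ^ (p - 1) :=
      Real.rpow_lt_rpow (le_max_right _ _) (by rw [max_eq_left ht.le]; exact max_lt hst ht)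
        (by linarith)
    nlinarith
  · have h2 : (max (-t) 0) ^ (p - 1) < (max (-s) 0) ^ (p - 1) :=
      Real.rpow_lt_rpow (le_max_right _ _)
        (by rw [max_eq_left (by linarith), max_eq_left (by linarith)]; linarith) (by linarith)
    nlinarith

lemma aux_flux_cont {p a b : ℝ} (hp : 1 < p) : Continuous (asymFlux p a b) := by
  unfold asymFlux
  have h : 0 ≤ p - 1 := by linarith
  refine Continuous.sub (continuous_const.mul ?_) (continuous_const.mul ?_)
  · exact (continuous_id.max continuous_const).rpow_const (fun _ => Or.inr h)
  · exact (continuous_neg.max continuous_const).rpow_const (fun _ => Or.inr h)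

lemma aux_E_cont {p a b : ℝ} (hp : 1 < p) : Continuous (asymE p a b) := by
  unfold asymE
  have h : 0 ≤ p := by linarith
  refine Continuous.add (continuous_const.mul ?_) (continuous_const.mul ?_)
  · exact (continuous_id.max continuous_const).rpow_const (fun _ => Or.inr h)
  · exact (continuous_neg.max continuous_const).rpow_const (fun _ => Or.inr h)

/-- Pointwise Picone inequality. -/
lemma aux_picone {p a b : ℝ} (hp : 1 < p) (ha : 0 < a) (hb : 0 < b) {v w : ℝ} (hv : 0 ≤ v)
    (hw : 0 < w) (s r : ℝ) :
    asymFlux p a b s * (p * v ^ (p - 1) * r / w ^ (p - 1) - (p - 1) * v ^ p * s / w ^ p)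
      ≤ asymE p a b r := by
  have hx : 0 ≤ v / w := by positivity
  have h := aux_young_flux hp ha hb (v / w * s) r
  rw [aux_flux_homog hx, aux_E_homog hx, ← aux_flux_mul hp s, Real.div_rpow hv hw.le,
    Real.div_rpow hv hw.le] at h
  have : asymFlux p a b s * (p * v ^ (p - 1) * r / w ^ (p - 1) - (p - 1) * v ^ p * s / w ^ p)
    = p * (v ^ (p - 1) / w ^ (p - 1) * asymFlux p a b s * r) -
      (p - 1) * (v ^ p / w ^ p * (asymFlux p a b s * s)) := by ring
  linarith

lemma aux_posrpow_deriv {p : ℝ} (hp : 1 < p) (x : ℝ) :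
    HasDerivAt (fun x : ℝ => (max x 0) ^ p) (p * (max x 0) ^ (p - 1)) x := by
  rcases lt_trichotomy x 0 with hx | hx | hx
  · rw [max_eq_right hx.le, Real.zero_rpow (by linarith), mul_zero]
    refine (hasDerivAt_const x (0:ℝ)).congr_of_eventuallyEq ?_
    filter_upwards [Iio_mem_nhds hx] with y hy
    rw [max_eq_right (le_of_lt hy), Real.zero_rpow (by linarith)]
  · subst hx
    rw [max_self]
    have h1 : HasDerivWithinAt (fun x : ℝ => (max x 0) ^ p) (p * 0 ^ (p - 1)) (Iic 0) (0:ℝ) := by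
      rw [Real.zero_rpow (by linarith), mul_zero]
      refine (hasDerivWithinAt_const (0:ℝ) (Iic 0) (0:ℝ)).congr ?_ ?_
      · intro y hy
        rw [max_eq_right hy, Real.zero_rpow (by linarith)]
      · rw [max_self, Real.zero_rpow (by linarith)]
    have h2 : HasDerivWithinAt (fun x : ℝ => (max x 0) ^ p) (p * 0 ^ (p - 1)) (Ici 0) (0:ℝ) := by
      refine (Real.hasDerivAt_rpow_const (x := 0) (Or.inr hp.le)).hasDerivWithinAt.congr ?_ ?_
      · intro y hy
        rw [max_eq_left hy]
      · rw [max_self]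
    have := h1.union h2
    rw [Iic_union_Ici] at this
    exact hasDerivWithinAt_univ.1 this
  · rw [max_eq_left hx.le]
    refine (Real.hasDerivAt_rpow_const (Or.inr hp.le)).congr_of_eventuallyEq ?_
    filter_upwards [Ioi_mem_nhds hx] with y hy
    rw [max_eq_left (le_of_lt hy)]

/-- The test function in Picone's identity and its derivative. -/
noncomputable def tst (p ε : ℝ) (u v : ℝ → ℝ) (t : ℝ) : ℝ :=
  (max (v t) 0) ^ p / (u t + ε) ^ (p - 1)

noncomputable def tst' (p ε : ℝ) (u u' v v' : ℝ → ℝ) (t : ℝ) : ℝ :=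
  p * (max (v t) 0) ^ (p - 1) * v' t / (u t + ε) ^ (p - 1) -
    (p - 1) * (max (v t) 0) ^ p * u' t / (u t + ε) ^ p

lemma C1On.cont {α γ : ℝ} {u u' : ℝ → ℝ} (h : C1On α γ u u') : ContinuousOn u (Icc α γ) :=
  fun t ht => (h.1 t ht).continuousWithinAt

lemma aux_tst_adm {p ε L : ℝ} (hp : 1 < p) (hε : 0 < ε) {u u' v v' : ℝ → ℝ}
    (hu : C1On 0 L u u') (hu0 : ∀ t ∈ Icc 0 L, 0 ≤ u t) (hv : Adm L v v') :
    Adm L (tst p ε u v) (tst' p ε u u' v v') := by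
  refine ⟨⟨?_, ?_⟩, ?_, ?_⟩
  · intro t ht
    have hw : 0 < u t + ε := by linarith [hu0 t ht]
    have h1 := (aux_posrpow_deriv hp (v t)).comp_hasDerivWithinAt t (hv.1.1 t ht)
    have h2 := ((hu.1 t ht).add_const ε).rpow_const (p := p - 1) (Or.inl hw.ne')
    have h3 := h1.div h2 (Real.rpow_pos_of_pos hw _).ne'
    refine h3.congr_deriv ?_
    unfold tst'
    have e1 : (u t + ε) ^ (p - 1) = (u t + ε) ^ (p - 1 - 1) * (u t + ε) := by
      conv_rhs => rw [← Real.rpow_add_one hw.ne']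
      congr 1; ring
    have e2 : (u t + ε) ^ p = (u t + ε) ^ (p - 1 - 1) * (u t + ε) * (u t + ε) := by
      rw [← e1, ← Real.rpow_add_one hw.ne']
      congr 1; ring
    have hq : 0 < (u t + ε) ^ (p - 1 - 1) := Real.rpow_pos_of_pos hw _
    simp only [Function.comp]
    rw [e2, e1]
    field_simp
  · have hw : ∀ t ∈ Icc 0 L, u t + ε ≠ 0 := fun t ht => by linarith [hu0 t ht]
    have hw' : ∀ q : ℝ, ∀ t ∈ Icc 0 L, (u t + ε) ^ q ≠ 0 := fun q t ht =>
      (Real.rpow_pos_of_pos (by linarith [hu0 t ht]) _).ne'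
    have cu : ContinuousOn (fun t => u t + ε) (Icc 0 L) := hu.cont.add continuousOn_const
    have cw : ∀ q : ℝ, ContinuousOn (fun t => (u t + ε) ^ q) (Icc 0 L) := fun q =>
      cu.rpow_const (fun t ht => Or.inl (hw t ht))
    have cv : ∀ q : ℝ, 0 ≤ q → ContinuousOn (fun t => (max (v t) 0) ^ q) (Icc 0 L) := fun q hq =>
      (hv.1.cont.sup continuousOn_const).rpow_const (fun t ht => Or.inr hq)
    unfold tst'
    refine ContinuousOn.sub (ContinuousOn.div ?_ (cw _) (hw' _)) (ContinuousOn.div ?_ (cw _) (hw' _))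
    · exact (continuousOn_const.mul (cv _ (by linarith))).mul hv.1.2
    · exact (continuousOn_const.mul (cv _ (by linarith))).mul hu.2
  · unfold tst
    rw [hv.2.1, max_self, Real.zero_rpow (by linarith), zero_div]
  · unfold tst
    rw [hv.2.2, max_self, Real.zero_rpow (by linarith), zero_div]

lemma aux_pair {p ε a b : ℝ} (hp : 1 < p) (hε : 0 < ε) (ha : 0 < a) (hb : 0 < b)
    {u u' w w' v v' : ℝ → ℝ} {t : ℝ} (hu : 0 ≤ u t) (hw : 0 ≤ w t) :
    asymFlux p a b (u' t) * tst' p ε u u' v v' t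
      + asymFlux p b a (w' t) * tst' p ε w w' (fun t => -v t) (fun t => -v' t) t
      ≤ asymE p a b (v' t) := by
  have z : ∀ (u u' v v' : ℝ → ℝ), v t ≤ 0 → tst' p ε u u' v v' t = 0 := by
    intro u u' v v' h
    unfold tst'
    rw [max_eq_right h, Real.zero_rpow (by linarith), Real.zero_rpow (by linarith)]
    simp
  rcases le_total 0 (v t) with h | h
  · rw [z w w' (fun t => -v t) _ (by simpa using h), mul_zero, add_zero]
    unfold tst'
    exact aux_picone hp ha hb (le_max_right _ _) (by linarith) _ _
  · rw [z u u' v _ h, mul_zero, zero_add, ← aux_E_neg]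
    unfold tst'
    exact aux_picone hp hb ha (le_max_right _ _) (by linarith) _ _

lemma aux_dBR {L : ℝ} (hL : 0 < L) {F g : ℝ → ℝ} (hF : Continuous F) (hg : Continuous g)
    (h : ∀ φ φ' : ℝ → ℝ, Adm L φ φ' → (∫ t in (0:ℝ)..L, F t * φ' t) = ∫ t in (0:ℝ)..L, g t * φ t) :
    ∃ c, ∀ t ∈ Icc 0 L, F t + (∫ x in (0:ℝ)..t, g x) = c := by
  set G : ℝ → ℝ := fun t => ∫ x in (0:ℝ)..t, g x with hG
  have dG : ∀ t, HasDerivAt G (g t) t := fun t =>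
    intervalIntegral.integral_hasDerivAt_right (hg.intervalIntegrable _ _)
      (hg.stronglyMeasurableAtFilter _ _) hg.continuousAt
  have cG : Continuous G := continuous_iff_continuousAt.2 fun t => (dG t).continuousAt
  set H : ℝ → ℝ := fun t => F t + G t with hH
  have cH : Continuous H := hF.add cG
  set c : ℝ := (∫ t in (0:ℝ)..L, H t) / L with hc
  set k : ℝ → ℝ := fun t => H t - c with hk
  have ck : Continuous k := cH.sub continuous_const
  set φ : ℝ → ℝ := fun t => ∫ x in (0:ℝ)..t, k x with hφ
  have dφ : ∀ t, HasDerivAt φ (k t) t := fun t =>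
    intervalIntegral.integral_hasDerivAt_right (ck.intervalIntegrable _ _)
      (ck.stronglyMeasurableAtFilter _ _) ck.continuousAt
  have cφ : Continuous φ := continuous_iff_continuousAt.2 fun t => (dφ t).continuousAt
  have φ0 : φ 0 = 0 := by simp [hφ]
  have φL : φ L = 0 := by
    simp only [hφ, hk]
    rw [intervalIntegral.integral_sub (cH.intervalIntegrable _ _)
      (continuous_const.intervalIntegrable _ _), intervalIntegral.integral_const, hc]
    simp only [smul_eq_mul, sub_zero]
    field_simp
    ring
  have hadm : Adm L φ k :=
    ⟨⟨fun t _ => (dφ t).hasDerivWithinAt, ck.continuousOn⟩, φ0, φL⟩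
  have e1 := h φ k hadm
  have e2 := intervalIntegral.integral_mul_deriv_eq_deriv_mul (a := 0) (b := L)
    (fun t _ => dG t) (fun t _ => dφ t) (hg.intervalIntegrable _ _) (ck.intervalIntegrable _ _)
  rw [φ0, φL] at e2
  have e3 : ∫ t in (0:ℝ)..L, k t = 0 := φL
  have e4 : ∫ t in (0:ℝ)..L, k t * k t = 0 := by
    have : ∀ t, k t * k t = F t * k t + G t * k t - c * k t := by
      intro t; simp only [hk, hH]; ring
    simp_rw [this]
    rw [intervalIntegral.integral_sub, intervalIntegral.integral_add,
      intervalIntegral.integral_const_mul, e3, e1, e2]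
    · simp
    · exact (hF.mul ck).intervalIntegrable _ _
    · exact (cG.mul ck).intervalIntegrable _ _
    · exact ((hF.mul ck).add (cG.mul ck)).intervalIntegrable _ _
    · exact (continuous_const.mul ck).intervalIntegrable _ _
  refine ⟨c, fun t ht => ?_⟩
  by_contra hne
  have : 0 < ∫ t in (0:ℝ)..L, k t * k t :=
    intervalIntegral.integral_pos hL (ck.mul ck).continuousOn (fun x _ => mul_self_nonneg _)
      ⟨t, ht, mul_self_pos.2 (sub_ne_zero.2 hne)⟩
  linarith

lemma aux_refl {p a b L lam : ℝ} {u u' : ℝ → ℝ}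
    (hsol : IsWeakSol p a b L u u' (fun t => lam * |u t| ^ (p - 2) * u t)) :
    IsWeakSol p b a L (fun t => u (L - t)) (fun t => -u' (L - t))
      (fun t => lam * |u (L - t)| ^ (p - 2) * u (L - t)) := by
  have mp : MapsTo (fun t : ℝ => L - t) (Icc 0 L) (Icc 0 L) := fun t ht =>
    ⟨by linarith [ht.2], by linarith [ht.1]⟩
  have adm : ∀ φ φ' : ℝ → ℝ, Adm L φ φ' → Adm L (fun t => φ (L - t)) (fun t => -φ' (L - t)) := by
    intro φ φ' h
    refine ⟨⟨?_, ?_⟩, ?_, ?_⟩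
    · intro t ht
      have h1 := (h.1.1 (L - t) (mp ht))
      have h2 : HasDerivWithinAt (fun t : ℝ => L - t) (-1) (Icc 0 L) t :=
        ((hasDerivAt_id t).const_sub L).hasDerivWithinAt
      have := h1.comp t h2 mp
      simpa [Function.comp_def] using this
    · exact (h.1.2.comp (continuous_const.sub continuous_id).continuousOn mp).neg
    · simpa using h.2.2
    · simpa using h.2.1
  refine ⟨adm _ _ hsol.1, fun φ φ' h => ?_⟩
  have := hsol.2 _ _ (adm _ _ h)
  have s1 := intervalIntegral.integral_comp_sub_left (a := 0) (b := L)
    (fun t => asymFlux p a b (u' t) * -φ' (L - t)) L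
  have s2 := intervalIntegral.integral_comp_sub_left (a := 0) (b := L)
    (fun t => lam * |u t| ^ (p - 2) * u t * φ (L - t)) L
  simp only [sub_sub_cancel, sub_self, sub_zero] at s1 s2
  rw [s2, ← this, ← s1]
  simp_rw [aux_flux_neg]
  congr 1; ext t; ring

lemma aux_neg {p a b L lam : ℝ} {u u' : ℝ → ℝ}
    (hsol : IsWeakSol p a b L u u' (fun t => lam * |u t| ^ (p - 2) * u t)) :
    IsWeakSol p b a L (fun t => -u t) (fun t => -u' t)
      (fun t => lam * |-u t| ^ (p - 2) * -u t) := by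
  refine ⟨⟨⟨fun t ht => (hsol.1.1.1 t ht).fun_neg, hsol.1.1.2.neg⟩, ?_, ?_⟩, fun φ φ' h => ?_⟩
  · simp [hsol.1.2.1]
  · simp [hsol.1.2.2]
  · simp_rw [aux_flux_neg, abs_neg, mul_neg, neg_mul, intervalIntegral.integral_neg, hsol.2 φ φ' h]

lemma aux_lam1_symm (p a b L : ℝ) : lam1 p b a L = lam1 p a b L := by
  have key : ∀ a b E : ℝ, (∃ u u' : ℝ → ℝ, Adm L u u' ∧ (∫ t in (0:ℝ)..L, |u t| ^ p) = 1 ∧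
      E = ∫ t in (0:ℝ)..L, asymE p a b (u' t)) → (∃ u u' : ℝ → ℝ, Adm L u u' ∧
      (∫ t in (0:ℝ)..L, |u t| ^ p) = 1 ∧ E = ∫ t in (0:ℝ)..L, asymE p b a (u' t)) := by
    rintro a b E ⟨u, u', h, h1, h2⟩
    refine ⟨fun t => -u t, fun t => -u' t,
      ⟨⟨fun t ht => (h.1.1 t ht).fun_neg, h.1.2.neg⟩, ?_, ?_⟩, ?_, ?_⟩
    · simp [h.2.1]
    · simp [h.2.2]
    · simpa using h1
    · simp_rw [aux_E_neg]; exact h2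
  unfold lam1
  congr 1
  ext E
  exact ⟨key b a E, key a b E⟩

lemma aux_rhs {p x : ℝ} (hp : 1 < p) (hx : 0 ≤ x) : |x| ^ (p - 2) * x = x ^ (p - 1) := by
  rcases hx.eq_or_lt with h | h
  · rw [← h, mul_zero, Real.zero_rpow (by linarith)]
  · rw [abs_of_pos h, ← Real.rpow_add_one h.ne']; congr 1; ring

lemma aux_rpow_sub_mul {p x : ℝ} (hp : 1 < p) (hx : 0 ≤ x) : x ^ (p - 1) * x = x ^ p := by
  rcases hx.eq_or_lt with h | h
  · rw [← h, mul_zero, Real.zero_rpow (by linarith)]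
  · rw [← Real.rpow_add_one h.ne']; congr 1; ring

/-- Energy identity. -/
lemma aux_energy {p a b L lam : ℝ} (hp : 1 < p) (hL : 0 < L) {u u' : ℝ → ℝ}
    (hsol : IsWeakSol p a b L u u' (fun t => lam * |u t| ^ (p - 2) * u t))
    (hu0 : ∀ t ∈ Icc 0 L, 0 ≤ u t) :
    ∫ t in (0:ℝ)..L, asymE p a b (u' t) = lam * ∫ t in (0:ℝ)..L, |u t| ^ p := by
  have h := hsol.2 u u' hsol.1
  simp_rw [aux_flux_mul hp] at h
  rw [h, ← intervalIntegral.integral_const_mul]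
  refine intervalIntegral.integral_congr fun t ht => ?_
  rw [uIcc_of_le hL.le] at ht
  rw [mul_assoc lam, aux_rhs hp (hu0 t ht), mul_assoc, aux_rpow_sub_mul hp (hu0 t ht),
    abs_of_nonneg (hu0 t ht)]

lemma aux_int_pos {p L : ℝ} (hp : 1 < p) (hL : 0 < L) {u : ℝ → ℝ} (hc : ContinuousOn u (Icc 0 L))
    (hne : ∃ t ∈ Set.Icc (0:ℝ) L, u t ≠ 0) : 0 < ∫ t in (0:ℝ)..L, |u t| ^ p := by
  obtain ⟨t, ht, h⟩ := hne
  exact intervalIntegral.integral_pos hL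
    (hc.abs.rpow_const fun _ _ => Or.inr (by linarith))
    (fun x _ => Real.rpow_nonneg (abs_nonneg _) _)
    ⟨t, ht, Real.rpow_pos_of_pos (abs_pos.2 h) _⟩

lemma aux_pos {p a b L lam : ℝ} (hp : 1 < p) (ha : 0 < a) (hb : 0 < b) (hL : 0 < L)
    (hlam : 0 ≤ lam) {u u' : ℝ → ℝ}
    (hsol : IsWeakSol p a b L u u' (fun t => lam * |u t| ^ (p - 2) * u t))
    (hu0 : ∀ t ∈ Icc 0 L, 0 ≤ u t) (hne : ∃ t ∈ Set.Icc (0:ℝ) L, u t ≠ 0) :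
    ∀ t ∈ Ioo 0 L, 0 < u t := by
  set π : ℝ → ℝ := fun t => max 0 (min t L) with hπ
  have cπ : Continuous π := by fun_prop
  have mπ : ∀ t, π t ∈ Icc 0 L := fun t => ⟨le_max_left _ _, max_le hL.le (min_le_right _ _)⟩
  have eπ : ∀ t ∈ Icc 0 L, π t = t := fun t ht => by
    simp only [hπ]; rw [min_eq_left ht.2, max_eq_right ht.1]
  have cu' : Continuous fun t => asymFlux p a b (u' (π t)) :=
    (aux_flux_cont hp).comp (hsol.1.1.2.comp_continuous cπ mπ)
  have cg : Continuous fun t => lam * (u (π t)) ^ (p - 1) :=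
    continuous_const.mul ((hsol.1.1.cont.comp_continuous cπ mπ).rpow_const
      fun _ => Or.inr (by linarith))
  obtain ⟨c, hc⟩ := aux_dBR hL cu' cg (by
    intro φ φ' h
    have := hsol.2 φ φ' h
    convert this using 1
    · refine intervalIntegral.integral_congr fun t ht => ?_
      rw [uIcc_of_le hL.le] at ht
      simp only [eπ t ht]
    · refine intervalIntegral.integral_congr fun t ht => ?_
      rw [uIcc_of_le hL.le] at ht
      simp only [eπ t ht]
      rw [← aux_rhs hp (hu0 t ht), ← mul_assoc lam])
  have anti : AntitoneOn u' (Icc 0 L) := by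
    intro s hs t ht hst
    have h1 := hc s hs
    have h2 := hc t ht
    rw [eπ s hs] at h1
    rw [eπ t ht] at h2
    have h3 := intervalIntegral.integral_add_adjacent_intervals (μ := MeasureTheory.volume)
      (cg.intervalIntegrable 0 s) (cg.intervalIntegrable s t)
    have h4 : 0 ≤ ∫ x in s..t, lam * (u (π x)) ^ (p - 1) :=
      intervalIntegral.integral_nonneg hst fun x _ =>
        mul_nonneg hlam (Real.rpow_nonneg (hu0 _ (mπ x)) _)
    exact (aux_flux_strictMono hp ha hb).le_iff_le.1 (by linarith)
  have dd : ∀ t ∈ Ioo 0 L, HasDerivAt u (u' t) t := fun t ht =>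
    (hsol.1.1.1 t (Ioo_subset_Icc_self ht)).hasDerivAt (Icc_mem_nhds ht.1 ht.2)
  have conc : ConcaveOn ℝ (Icc 0 L) u := by
    refine AntitoneOn.concaveOn_of_deriv (convex_Icc _ _) hsol.1.1.cont ?_ ?_
    · rw [interior_Icc]
      exact fun t ht => (dd t ht).differentiableAt.differentiableWithinAt
    · rw [interior_Icc]
      intro s hs t ht hst
      rw [(dd s hs).deriv, (dd t ht).deriv]
      exact anti (Ioo_subset_Icc_self hs) (Ioo_subset_Icc_self ht) hst
  obtain ⟨t₀, ht₀, hne0⟩ := hne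
  have hpos : 0 < u t₀ := lt_of_le_of_ne (hu0 t₀ ht₀) (Ne.symm hne0)
  intro t ht
  rcases le_total t t₀ with h | h
  · have t0 : 0 < t₀ := lt_of_lt_of_le ht.1 h
    have := conc.2 (left_mem_Icc.2 hL.le) ht₀
      (show 0 ≤ 1 - t / t₀ by rw [sub_nonneg, div_le_one t0]; exact h)
      (show 0 ≤ t / t₀ from div_nonneg ht.1.le t0.le) (by ring)
    simp only [smul_eq_mul, hsol.1.2.1, mul_zero, zero_add, div_mul_cancel₀ _ t0.ne'] at this
    have h2 : 0 < t / t₀ * u t₀ := mul_pos (div_pos ht.1 t0) hpos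
    linarith
  · have t0 : 0 < L - t₀ := by linarith [ht.2]
    have := conc.2 (right_mem_Icc.2 hL.le) ht₀
      (show 0 ≤ 1 - (L - t) / (L - t₀) by rw [sub_nonneg, div_le_one t0]; linarith)
      (show 0 ≤ (L - t) / (L - t₀) from div_nonneg (by linarith [ht.2]) t0.le) (by ring)
    have e : (1 - (L - t) / (L - t₀)) * L + (L - t) / (L - t₀) * t₀ = t := by
      field_simp; ring
    simp only [smul_eq_mul, hsol.1.2.2, mul_zero, zero_add, e] at this
    have h2 : 0 < (L - t) / (L - t₀) * u t₀ := mul_pos (div_pos (by linarith [ht.2]) t0) hpos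
    linarith

open Filter Topology in
lemma aux_lim {p L : ℝ} (hp : 1 < p) (hL : 0 < L) {u v : ℝ → ℝ}
    (cu : ContinuousOn u (Icc 0 L)) (cv : ContinuousOn v (Icc 0 L))
    (hu0 : ∀ t ∈ Icc 0 L, 0 ≤ u t) (hpos : ∀ t ∈ Ioo 0 L, 0 < u t) :
    Tendsto (fun n : ℕ => ∫ t in (0:ℝ)..L, u t ^ (p - 1) * tst p (1 / ((n:ℝ) + 1)) u v t) atTop
      (𝓝 (∫ t in (0:ℝ)..L, (max (v t) 0) ^ p)) := by
  have cv' : ContinuousOn (fun t => (max (v t) 0) ^ p) (Icc 0 L) :=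
      (cv.sup continuousOn_const).rpow_const (fun t ht => Or.inr (by linarith))
  have hε : ∀ n : ℕ, 0 < 1 / ((n:ℝ) + 1) := fun n => by positivity
  refine intervalIntegral.tendsto_integral_filter_of_dominated_convergence
    (fun t => (max (v t) 0) ^ p) ?_ ?_ ?_ ?_
  · refine Eventually.of_forall fun n => ?_
    have : ContinuousOn (fun t => u t ^ (p - 1) * tst p (1 / ((n:ℝ) + 1)) u v t) (Icc 0 L) := by
      unfold tst
      refine (cu.rpow_const fun _ _ => Or.inr (by linarith)).mul (cv'.div ?_ ?_)
      · exact (cu.add continuousOn_const).rpow_const fun _ _ => Or.inr (by linarith)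
      · exact fun t ht => (Real.rpow_pos_of_pos (by linarith [hu0 t ht, hε n]) _).ne'
    rw [uIoc_of_le hL.le]
    exact (this.mono Ioc_subset_Icc_self).aestronglyMeasurable measurableSet_Ioc
  · refine Eventually.of_forall fun n => Eventually.of_forall fun t ht => ?_
    rw [uIoc_of_le hL.le] at ht
    have h0 := hu0 t (Ioc_subset_Icc_self ht)
    have hw : 0 < u t + 1 / ((n:ℝ) + 1) := by linarith [hε n]
    have hv : 0 ≤ (max (v t) 0) ^ p := Real.rpow_nonneg (le_max_right _ _) _
    have hq : 0 < (u t + 1 / ((n:ℝ) + 1)) ^ (p - 1) := Real.rpow_pos_of_pos hw _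
    have hr : 0 ≤ u t ^ (p - 1) := Real.rpow_nonneg h0 _
    have hle : u t ^ (p - 1) ≤ (u t + 1 / ((n:ℝ) + 1)) ^ (p - 1) :=
      Real.rpow_le_rpow h0 (by linarith [hε n]) (by linarith)
    unfold tst
    rw [Real.norm_of_nonneg (by positivity), mul_div_assoc', div_le_iff₀ hq, mul_comm]
    exact mul_le_mul_of_nonneg_left hle hv
  · exact cv'.intervalIntegrable_of_Icc hL.le
  · have hLne : ∀ᵐ t : ℝ, t ≠ L := by
      simp [MeasureTheory.ae_iff]
    filter_upwards [hLne] with t htL ht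
    rw [uIoc_of_le hL.le] at ht
    have h0 := hpos t ⟨ht.1, lt_of_le_of_ne ht.2 htL⟩
    have h1 : Tendsto (fun n : ℕ => u t + 1 / ((n:ℝ) + 1)) atTop (𝓝 (u t)) := by
      simpa using tendsto_const_nhds.add (tendsto_one_div_add_atTop_nhds_zero_nat (𝕜 := ℝ))
    have h2 := h1.rpow_const (p := p - 1) (Or.inl h0.ne')
    have hne : u t ^ (p - 1) ≠ 0 := (Real.rpow_pos_of_pos h0 _).ne'
    have h3 := ((tendsto_const_nhds (x := (max (v t) 0) ^ p)).div h2 hne).const_mul (u t ^ (p - 1))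
    rw [mul_div_cancel₀ _ hne] at h3
    exact h3

lemma aux_weak_tst {p a b L lam ε : ℝ} (hp : 1 < p) (hL : 0 < L) (hε : 0 < ε) {u u' v v' : ℝ → ℝ}
    (hsol : IsWeakSol p a b L u u' (fun t => lam * |u t| ^ (p - 2) * u t))
    (hu0 : ∀ t ∈ Icc 0 L, 0 ≤ u t) (hv : Adm L v v') :
    ∫ t in (0:ℝ)..L, asymFlux p a b (u' t) * tst' p ε u u' v v' t =
      lam * ∫ t in (0:ℝ)..L, u t ^ (p - 1) * tst p ε u v t := by
  rw [hsol.2 _ _ (aux_tst_adm hp hε hsol.1.1 hu0 hv), ← intervalIntegral.integral_const_mul]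
  refine intervalIntegral.integral_congr fun t ht => ?_
  rw [uIcc_of_le hL.le] at ht
  simp only
  rw [mul_assoc lam, aux_rhs hp (hu0 t ht), mul_assoc]

open Filter Topology in
lemma aux_lower {p a b L lam : ℝ} (hp : 1 < p) (ha : 0 < a) (hb : 0 < b) (hL : 0 < L)
    (hlam : 0 ≤ lam) {u u' v v' : ℝ → ℝ}
    (hsol : IsWeakSol p a b L u u' (fun t => lam * |u t| ^ (p - 2) * u t))
    (hu0 : ∀ t ∈ Icc 0 L, 0 ≤ u t) (hne : ∃ t ∈ Set.Icc (0:ℝ) L, u t ≠ 0) (hv : Adm L v v') :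
    lam * ∫ t in (0:ℝ)..L, |v t| ^ p ≤ ∫ t in (0:ℝ)..L, asymE p a b (v' t) := by
  have hpos := aux_pos hp ha hb hL hlam hsol hu0 hne
  have hsol2 := aux_refl hsol
  set w : ℝ → ℝ := fun t => u (L - t) with hw
  set w' : ℝ → ℝ := fun t => -u' (L - t) with hw'
  have hw0 : ∀ t ∈ Icc 0 L, 0 ≤ w t := fun t ht =>
    hu0 _ ⟨by linarith [ht.2], by linarith [ht.1]⟩
  have hwpos : ∀ t ∈ Ioo 0 L, 0 < w t := fun t ht =>
    hpos _ ⟨by linarith [ht.2], by linarith [ht.1]⟩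
  have hnv : Adm L (fun t => -v t) (fun t => -v' t) :=
    ⟨⟨fun t ht => (hv.1.1 t ht).fun_neg, hv.1.2.neg⟩, by simp [hv.2.1], by simp [hv.2.2]⟩
  have step : ∀ ε : ℝ, 0 < ε → lam * (∫ t in (0:ℝ)..L, u t ^ (p - 1) * tst p ε u v t) +
      lam * (∫ t in (0:ℝ)..L, w t ^ (p - 1) * tst p ε w (fun t => -v t) t) ≤
      ∫ t in (0:ℝ)..L, asymE p a b (v' t) := by
    intro ε hε
    rw [← aux_weak_tst hp hL hε hsol hu0 hv, ← aux_weak_tst hp hL hε hsol2 hw0 hnv]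
    have i1 := (((aux_flux_cont (a := a) (b := b) hp).comp_continuousOn hsol.1.1.2).mul
      (aux_tst_adm hp hε hsol.1.1 hu0 hv).1.2).intervalIntegrable_of_Icc
      (μ := MeasureTheory.volume) hL.le
    have i2 := (((aux_flux_cont (a := b) (b := a) hp).comp_continuousOn hsol2.1.1.2).mul
      (aux_tst_adm hp hε hsol2.1.1 hw0 hnv).1.2).intervalIntegrable_of_Icc
      (μ := MeasureTheory.volume) hL.le
    have i3 := ((aux_E_cont (a := a) (b := b) hp).comp_continuousOn
      hv.1.2).intervalIntegrable_of_Icc (μ := MeasureTheory.volume) hL.le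
    refine (intervalIntegral.integral_add i1 i2).symm.trans_le ?_
    refine intervalIntegral.integral_mono_on hL.le (i1.add i2) i3 fun t ht => ?_
    exact aux_pair hp hε ha hb (hu0 t ht) (hw0 t ht)
  have l1 := aux_lim hp hL hsol.1.1.cont hv.1.cont hu0 hpos
  have l2 := aux_lim hp hL hsol2.1.1.cont hnv.1.cont hw0 hwpos
  have l3 := le_of_tendsto' ((l1.const_mul lam).add (l2.const_mul lam))
    (fun n => step _ (by positivity))
  refine le_trans (le_of_eq ?_) l3
  rw [← mul_add, ← intervalIntegral.integral_add]
  · congr 2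
    ext t
    have z : (0:ℝ) ^ p = 0 := Real.zero_rpow (by linarith)
    rcases le_total 0 (v t) with h | h
    · rw [abs_of_nonneg h, max_eq_left h, max_eq_right (by linarith), z, add_zero]
    · rw [abs_of_nonpos h, max_eq_right h, max_eq_left (by linarith), z, zero_add]
  · exact ((hv.1.cont.sup continuousOn_const).rpow_const
      (fun t ht => Or.inr (by linarith))).intervalIntegrable_of_Icc hL.le
  · exact ((hnv.1.cont.sup continuousOn_const).rpow_const
      (fun t ht => Or.inr (by linarith))).intervalIntegrable_of_Icc hL.le

lemma aux_main {p a b L lam : ℝ} (hp : 1 < p) (ha : 0 < a) (hb : 0 < b) (hL : 0 < L)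
    {u u' : ℝ → ℝ}
    (hsol : IsWeakSol p a b L u u' (fun t => lam * |u t| ^ (p - 2) * u t))
    (hu0 : ∀ t ∈ Icc 0 L, 0 ≤ u t) (hne : ∃ t ∈ Set.Icc (0:ℝ) L, u t ≠ 0) :
    lam = lam1 p a b L := by
  have hE := aux_energy hp hL hsol hu0
  have hI := aux_int_pos hp hL hsol.1.1.cont hne
  set I := ∫ t in (0:ℝ)..L, |u t| ^ p with hIdef
  have hlam : 0 ≤ lam := by
    have : 0 ≤ lam * I := by
      rw [← hE]
      exact intervalIntegral.integral_nonneg hL.le fun t _ => aux_E_nonneg ha hb _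
    exact nonneg_of_mul_nonneg_left this hI
  symm
  unfold lam1
  refine IsLeast.csInf_eq ⟨?_, ?_⟩
  · set c : ℝ := I ^ (-(1 / p)) with hc
    have hc0 : 0 < c := Real.rpow_pos_of_pos hI _
    have hcp : c ^ p = I⁻¹ := by
      rw [hc, ← Real.rpow_mul hI.le, neg_mul, one_div, inv_mul_cancel₀ (by linarith),
        Real.rpow_neg_one]
    refine ⟨fun t => c * u t, fun t => c * u' t,
      ⟨⟨fun t ht => (hsol.1.1.1 t ht).const_mul c, continuousOn_const.mul hsol.1.1.2⟩,
        by simp [hsol.1.2.1], by simp [hsol.1.2.2]⟩, ?_, ?_⟩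
    · simp_rw [abs_mul, abs_of_pos hc0, Real.mul_rpow hc0.le (abs_nonneg _)]
      rw [intervalIntegral.integral_const_mul, hcp, ← hIdef, inv_mul_cancel₀ hI.ne']
    · simp_rw [aux_E_homog hc0.le]
      rw [intervalIntegral.integral_const_mul, hcp, hE]
      field_simp
  · rintro E ⟨v, v', hv, h1, rfl⟩
    have := aux_lower hp ha hb hL hlam hsol hu0 hne hv
    rwa [h1, mul_one] at this

theorem stmt12 (p a b L : ℝ) (hp : 1 < p) (ha : 0 < a) (hb : 0 < b) (hL : 0 < L)
    (lam : ℝ) (hlam : lam ≠ lam1 p a b L) (u u' : ℝ → ℝ)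
    (hsol : IsWeakSol p a b L u u' (fun t => lam * |u t| ^ (p - 2) * u t))
    (hne : ∃ t ∈ Set.Icc (0:ℝ) L, u t ≠ 0) :
    (∃ t₁ ∈ Set.Ioo (0:ℝ) L, 0 < u t₁) ∧ (∃ t₂ ∈ Set.Ioo (0:ℝ) L, u t₂ < 0) := by
  have bd : ∀ t ∈ Icc 0 L, t ∉ Ioo 0 L → u t = 0 := by
    intro t ht hn
    rcases ht.1.eq_or_lt with h | h
    · rw [← h]; exact hsol.1.2.1
    · rcases ht.2.eq_or_lt with h' | h'
      · rw [h']; exact hsol.1.2.2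
      · exact absurd ⟨h, h'⟩ hn
  constructor
  · by_contra hcon
    push Not at hcon
    refine hlam ?_
    rw [← aux_lam1_symm]
    refine aux_main hp hb ha hL (aux_neg hsol) (fun t ht => ?_) ?_
    · by_cases h : t ∈ Ioo 0 L
      · linarith [hcon t h]
      · rw [bd t ht h, neg_zero]
    · obtain ⟨t, ht, h⟩ := hne
      exact ⟨t, ht, neg_ne_zero.2 h⟩
  · by_contra hcon
    push Not at hcon
    refine hlam (aux_main hp ha hb hL hsol (fun t ht => ?_) hne)
    by_cases h : t ∈ Ioo 0 L
    · exact hcon t h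
    · rw [bd t ht h]
end

section
/- Let p > 1 and a, b, L, μ, ν > 0, and let u be a nontrivial C¹ weak solution of −Δ^{a,b}_p u = μ (u⁺)^{p−1} − ν (u⁻)^{p−1} on (0,L) with u(0) = u(L) = 0. Then all zeroes of u are simple: the set {t ∈ [0,L] : u(t) = 0} is finite, and u'(z) ≠ 0 for every z ∈ [0,L] with u(z) = 0. -/
open Set

lemma posPart_rpow_hasDerivAt (q x : ℝ) (hq : 1 < q) :
    HasDerivAt (fun y : ℝ => (max y 0) ^ q) (q * (max x 0) ^ (q - 1)) x := by
  rcases lt_trichotomy x 0 with h | h | h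
  · have h1 : (fun y : ℝ => (max y 0) ^ q) =ᶠ[nhds x] fun _ => (0:ℝ) := by
      filter_upwards [Iio_mem_nhds h] with y hy
      rw [max_eq_right (le_of_lt hy), Real.zero_rpow (by linarith)]
    rw [max_eq_right h.le, Real.zero_rpow (by linarith), mul_zero]
    exact (hasDerivAt_const x (0:ℝ)).congr_of_eventuallyEq h1
  · subst h
    rw [← hasDerivWithinAt_univ, ← Iic_union_Ici (a := (0:ℝ))]
    rw [max_self]
    refine HasDerivWithinAt.union ?_ ?_
    · rw [Real.zero_rpow (by linarith), mul_zero]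
      refine (hasDerivWithinAt_const (0:ℝ) (Iic 0) (0:ℝ)).congr ?_ ?_
      · intro y hy
        rw [max_eq_right hy, Real.zero_rpow (by linarith)]
      · rw [max_self, Real.zero_rpow (by linarith)]
    · refine (Real.hasDerivAt_rpow_const (x := 0) (p := q) (Or.inr hq.le)).hasDerivWithinAt.congr ?_ ?_
      · intro y hy
        rw [max_eq_left hy]
      · rw [max_self]
  · have h1 : (fun y : ℝ => (max y 0) ^ q) =ᶠ[nhds x] fun y => y ^ q := by
      filter_upwards [Ioi_mem_nhds h] with y hy
      rw [max_eq_left (le_of_lt hy)]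
    rw [max_eq_left h.le]
    exact (Real.hasDerivAt_rpow_const (Or.inr hq.le)).congr_of_eventuallyEq h1

lemma asymFlux_pos (p a b s : ℝ) (hp : 1 < p) (ha : 0 < a) (hb : 0 < b) :
    (max (asymFlux p a b s / a ^ p) 0) ^ (p / (p - 1) - 1) = max s 0 := by
  have hq : p / (p - 1) - 1 = (p - 1)⁻¹ := by
    have : p - 1 ≠ 0 := by linarith
    field_simp
    ring
  have ha' : 0 < a ^ p := Real.rpow_pos_of_pos ha p
  have hb' : 0 < b ^ p := Real.rpow_pos_of_pos hb p
  have hp' : p - 1 ≠ 0 := by linarith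
  rw [hq]
  unfold asymFlux
  rcases le_total 0 s with h | h
  · rw [max_eq_right (by linarith : -s ≤ 0), Real.zero_rpow hp', mul_zero, sub_zero,
      mul_div_cancel_left₀ _ ha'.ne', max_eq_left h, max_eq_left (Real.rpow_nonneg h _),
      Real.rpow_rpow_inv h hp']
  · rw [max_eq_right h, Real.zero_rpow hp', mul_zero, zero_sub, max_eq_right,
      Real.zero_rpow (inv_ne_zero hp')]
    apply div_nonpos_of_nonpos_of_nonneg _ ha'.le
    have : 0 ≤ (max (-s) 0) ^ (p - 1) := Real.rpow_nonneg (le_max_right _ _) _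
    nlinarith [mul_nonneg hb'.le this]

lemma asymFlux_neg (p a b s : ℝ) : - asymFlux p a b s = asymFlux p b a (-s) := by
  unfold asymFlux
  rw [neg_neg]; ring

lemma asymFlux_cont (p a b : ℝ) (hp : 1 < p) : Continuous (asymFlux p a b) := by
  unfold asymFlux
  have h1 : Continuous fun s : ℝ => (max s 0) ^ (p - 1) :=
    (continuous_id.max continuous_const).rpow_const (fun _ => Or.inr (by linarith))
  have h2 : Continuous fun s : ℝ => (max (-s) 0) ^ (p - 1) :=
    (continuous_neg.max continuous_const).rpow_const (fun _ => Or.inr (by linarith))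
  exact (continuous_const.mul h1).sub (continuous_const.mul h2)

/-- du Bois-Reymond lemma. -/
lemma duBois (L : ℝ) (hL : 0 < L) (w g : ℝ → ℝ) (hw : Continuous w) (hg : Continuous g)
    (h : ∀ φ φ' : ℝ → ℝ, Adm L φ φ' →
      (∫ t in (0:ℝ)..L, w t * φ' t) = ∫ t in (0:ℝ)..L, g t * φ t) :
    ∃ c, ∀ t ∈ Icc (0:ℝ) L, w t = c - ∫ s in (0:ℝ)..t, g s := by
  set J : ℝ → ℝ := fun t => ∫ s in (0:ℝ)..t, g s with hJ
  have hJd : ∀ t, HasDerivAt J (g t) t := fun t =>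
    intervalIntegral.integral_hasDerivAt_right (hg.intervalIntegrable _ _)
      (hg.stronglyMeasurableAtFilter _ _) hg.continuousAt
  have hJc : Continuous J := continuous_iff_continuousAt.2 fun t => (hJd t).continuousAt
  set c : ℝ := (∫ t in (0:ℝ)..L, (w t + J t)) / L with hc
  set f : ℝ → ℝ := fun t => w t + J t - c with hf
  have hfc : Continuous f := (hw.add hJc).sub continuous_const
  set φ : ℝ → ℝ := fun t => ∫ s in (0:ℝ)..t, f s with hφ
  have hφd : ∀ t, HasDerivAt φ (f t) t := fun t =>
    intervalIntegral.integral_hasDerivAt_right (hfc.intervalIntegrable _ _)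
      (hfc.stronglyMeasurableAtFilter _ _) hfc.continuousAt
  have hφc : Continuous φ := continuous_iff_continuousAt.2 fun t => (hφd t).continuousAt
  have hφ0 : φ 0 = 0 := by simp [hφ]
  have i1 : IntervalIntegrable (fun t => w t + J t) MeasureTheory.volume 0 L :=
    (hw.add hJc).intervalIntegrable _ _
  have i2 : IntervalIntegrable (fun t => g t * φ t) MeasureTheory.volume 0 L :=
    (hg.mul hφc).intervalIntegrable _ _
  have i3 : IntervalIntegrable (fun t => J t * f t) MeasureTheory.volume 0 L :=
    (hJc.mul hfc).intervalIntegrable _ _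
  have i4 : IntervalIntegrable (fun t => w t * f t) MeasureTheory.volume 0 L :=
    (hw.mul hfc).intervalIntegrable _ _
  have i5 : IntervalIntegrable (fun t => c * f t) MeasureTheory.volume 0 L :=
    (continuous_const.mul hfc).intervalIntegrable _ _
  have i6 : IntervalIntegrable (fun t => w t * f t + J t * f t) MeasureTheory.volume 0 L :=
    i4.add i3
  have hφL : φ L = 0 := by
    simp only [hφ, hf]
    rw [intervalIntegral.integral_sub i1
      (continuous_const.intervalIntegrable _ _), intervalIntegral.integral_const, hc]
    simp only [smul_eq_mul, sub_zero]
    field_simp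
    ring
  have hmain := h φ f ⟨⟨fun t _ => (hφd t).hasDerivWithinAt, hfc.continuousOn⟩, hφ0, hφL⟩
  have hparts := intervalIntegral.integral_deriv_mul_eq_sub (a := 0) (b := L)
    (u := J) (v := φ) (u' := g) (v' := f) (fun t _ => hJd t) (fun t _ => hφd t)
    (hg.intervalIntegrable _ _) (hfc.intervalIntegrable _ _)
  rw [hφ0, hφL, mul_zero, mul_zero, sub_zero,
    intervalIntegral.integral_add i2 i3] at hparts
  have hsq : ∫ t in (0:ℝ)..L, f t * f t = 0 := by
    have e : ∀ t, f t * f t = w t * f t + J t * f t - c * f t := fun t => by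
      simp only [hf]; ring
    simp_rw [e]
    rw [intervalIntegral.integral_sub
        i6 i5,
      intervalIntegral.integral_add i4 i3, intervalIntegral.integral_const_mul]
    have : (∫ s in (0:ℝ)..L, f s) = 0 := hφL
    rw [this]
    linarith
  refine ⟨c, fun t ht => ?_⟩
  by_contra hne
  have hft : f t ≠ 0 := fun h0 => hne (by simp only [hf, hJ] at h0; linarith)
  have := intervalIntegral.integral_pos hL (f := fun t => f t * f t)
    (hfc.mul hfc).continuousOn (fun x _ => mul_self_nonneg _)
    ⟨t, ht, mul_self_pos.2 hft⟩
  linarith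

theorem stmt13 (p a b L μ ν : ℝ) (hp : 1 < p) (ha : 0 < a) (hb : 0 < b) (hL : 0 < L)
    (hμ : 0 < μ) (hν : 0 < ν) (u u' : ℝ → ℝ)
    (hsol : IsWeakSol p a b L u u'
      (fun t => μ * (max (u t) 0) ^ (p - 1) - ν * (max (-u t) 0) ^ (p - 1)))
    (hne : ∃ t ∈ Set.Icc (0:ℝ) L, u t ≠ 0) :
    {t ∈ Set.Icc (0:ℝ) L | u t = 0}.Finite ∧
    ∀ z ∈ Set.Icc (0:ℝ) L, u z = 0 → u' z ≠ 0 := by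
  obtain ⟨⟨⟨hud, huc'⟩, hu0, huL⟩, hweak⟩ := hsol
  have huc : ContinuousOn u (Icc 0 L) := fun t ht => (hud t ht).continuousWithinAt
  have key : ∀ z ∈ Set.Icc (0:ℝ) L, u z = 0 → u' z ≠ 0 := by
    intro z hz huz hu'z
    set F := asymFlux p a b with hF
    set G : ℝ → ℝ := fun x => μ * (max x 0) ^ (p - 1) - ν * (max (-x) 0) ^ (p - 1) with hG
    have hGc : Continuous G := by
      have h1 : Continuous fun s : ℝ => (max s 0) ^ (p - 1) :=
        (continuous_id.max continuous_const).rpow_const (fun _ => Or.inr (by linarith))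
      have h2 : Continuous fun s : ℝ => (max (-s) 0) ^ (p - 1) :=
        (continuous_neg.max continuous_const).rpow_const (fun _ => Or.inr (by linarith))
      exact (continuous_const.mul h1).sub (continuous_const.mul h2)
    set U : ℝ → ℝ := IccExtend hL.le ((Icc 0 L).domRestrict u) with hU
    set U' : ℝ → ℝ := IccExtend hL.le ((Icc 0 L).domRestrict u') with hU'
    have hUc : Continuous U := huc.domRestrict.Icc_extend'
    have hUc' : Continuous U' := huc'.domRestrict.Icc_extend'
    have hUe : ∀ t ∈ Icc (0:ℝ) L, U t = u t := fun t ht => by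
      rw [hU, IccExtend_of_mem _ _ ht]; rfl
    have hUe' : ∀ t ∈ Icc (0:ℝ) L, U' t = u' t := fun t ht => by
      rw [hU', IccExtend_of_mem _ _ ht]; rfl
    have hgc : Continuous fun t => G (U t) := hGc.comp hUc
    obtain ⟨c, hc⟩ := duBois L hL (fun t => F (U' t)) (fun t => G (U t))
      ((asymFlux_cont p a b hp).comp hUc') hgc (by
        intro φ φ' hφ
        have h1 := hweak φ φ' hφ
        convert h1 using 1
        · apply intervalIntegral.integral_congr
          intro t ht
          rw [uIcc_of_le hL.le] at ht
          simp only [hUe' t ht, hF]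
        · apply intervalIntegral.integral_congr
          intro t ht
          rw [uIcc_of_le hL.le] at ht
          simp only [hUe t ht, hG])
    set V : ℝ → ℝ := fun t => c - ∫ s in (0:ℝ)..t, G (U s) with hV
    have hVd : ∀ t, HasDerivAt V (- G (U t)) t := fun t =>
      (intervalIntegral.integral_hasDerivAt_right (hgc.intervalIntegrable _ _)
        (hgc.stronglyMeasurableAtFilter _ _) hgc.continuousAt).const_sub c
    have hVe : ∀ t ∈ Icc (0:ℝ) L, V t = F (u' t) := fun t ht => by
      rw [← hUe' t ht]; exact (hc t ht).symm
    set q := p / (p - 1) with hq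
    have hp1 : 0 < p - 1 := by linarith
    have hq1 : 1 < q := by rw [hq, lt_div_iff₀ hp1]; linarith
    have hqp : (p - 1) * q = p := by rw [hq]; field_simp
    have hA : 0 < a ^ p := Real.rpow_pos_of_pos ha p
    have hB : 0 < b ^ p := Real.rpow_pos_of_pos hb p
    set K : ℝ → ℝ := fun y =>
      a ^ p * (max (y / a ^ p) 0) ^ q + b ^ p * (max (-y / b ^ p) 0) ^ q with hK
    have hKd : ∀ y, HasDerivAt K
        (q * (max (y / a ^ p) 0) ^ (q - 1) - q * (max (-y / b ^ p) 0) ^ (q - 1)) y := by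
      intro y
      have h1 := ((posPart_rpow_hasDerivAt q (y / a ^ p) hq1).comp y
        ((hasDerivAt_id y).div_const (a ^ p))).const_mul (a ^ p)
      have h2 := ((posPart_rpow_hasDerivAt q (-y / b ^ p) hq1).comp y
        ((hasDerivAt_id y).neg.div_const (b ^ p))).const_mul (b ^ p)
      refine (h1.add h2).congr_deriv ?_
      field_simp
      ring
    set M : ℝ → ℝ := fun x => μ * (max x 0) ^ p + ν * (max (-x) 0) ^ p with hM
    have hMd : ∀ x, HasDerivAt M (p * G x) x := by
      intro x
      have h1 := (posPart_rpow_hasDerivAt p x hp).const_mul μ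
      have h2 := ((posPart_rpow_hasDerivAt p (-x) hp).comp x (hasDerivAt_id x).neg).const_mul ν
      refine (h1.add h2).congr_deriv ?_
      simp only [hG]
      ring
    set H : ℝ → ℝ := fun t => (p - 1) * K (V t) + M (u t) with hH
    have hHd : ∀ t ∈ Icc (0:ℝ) L, HasDerivWithinAt H 0 (Icc 0 L) t := by
      intro t ht
      have h1 := (((hKd (V t)).comp t (hVd t)).const_mul (p - 1)).hasDerivWithinAt (s := Icc 0 L)
      have h2 := (hMd (u t)).comp_hasDerivWithinAt t (hud t ht)
      refine (h1.add h2).congr_deriv ?_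
      rw [hVe t ht, hUe t ht, asymFlux_pos p a b _ hp ha hb, hF, asymFlux_neg,
        asymFlux_pos p b a _ hp hb ha]
      have h3 : max (u' t) 0 - max (-u' t) 0 = u' t := by
        rcases le_total 0 (u' t) with h | h
        · rw [max_eq_left h, max_eq_right (by linarith)]; ring
        · rw [max_eq_right h, max_eq_left (by linarith)]; ring
      rw [← mul_sub, h3]
      linear_combination (-(u' t * G (u t))) * hqp
    have hHconst : ∀ t ∈ Icc (0:ℝ) L, H t = H z := by
      intro t ht
      have := (convex_Icc (0:ℝ) L).norm_image_sub_le_of_norm_hasDerivWithin_le (C := 0)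
        hHd (fun x _ => by simp) hz ht
      rw [zero_mul] at this
      exact sub_eq_zero.1 (norm_le_zero_iff.1 this)
    have hHz : H z = 0 := by
      simp only [hH]
      rw [hVe z hz, huz, hu'z]
      have : F 0 = 0 := by simp [hF, asymFlux, Real.zero_rpow hp1.ne']
      rw [this]
      simp [hK, hM, Real.zero_rpow (by linarith : p ≠ 0), Real.zero_rpow (by linarith : q ≠ 0)]
    obtain ⟨t, ht, hut⟩ := hne
    have h0 := (hHconst t ht).trans hHz
    have hKn : 0 ≤ K (V t) := by simp only [hK]; positivity
    have hMp : 0 < M (u t) := by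
      simp only [hM]
      rcases lt_or_gt_of_ne hut with h | h
      · have : 0 < max (-u t) 0 := lt_max_of_lt_left (by linarith)
        positivity
      · have : 0 < max (u t) 0 := lt_max_of_lt_left h
        positivity
    have := mul_nonneg hp1.le hKn
    simp only [hH] at h0
    linarith
  refine ⟨?_, key⟩
  by_contra hinf
  obtain ⟨z, hz, hacc⟩ := (show Set.Infinite _ from hinf).exists_accPt_of_subset_isCompact
    isCompact_Icc (fun t ht => ht.1)
  have hfr := accPt_iff_frequently.1 hacc
  have huz : u z = 0 := by
    by_contra hne0
    have := (huc z hz).eventually_ne hne0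
    rw [eventually_nhdsWithin_iff] at this
    obtain ⟨y, ⟨_, hy⟩, hy2⟩ := (hfr.and_eventually this).exists
    exact hy2 hy.1 hy.2
  have := (hud z hz).eventually_ne (c := 0) (key z hz huz)
  rw [eventually_nhdsWithin_iff] at this
  obtain ⟨y, ⟨hyz, hy⟩, hy2⟩ := (hfr.and_eventually this).exists
  exact hy2 ⟨hy.1, hyz⟩ hy.2
end
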